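/- Let A be a d×n matrix with entries in ℕ, each of whose columns is nonzero, let π : ℕⁿ → ℕ^d be π(u) = Au with image ℕA, and let U ⊆ ℕⁿ be an upper set for the componentwise order (the set of exponents of a monomial ideal M). For b ∈ ℕA define the (M,A) fiber over b as F_b = { u ∈ ℕⁿ : Au = b and u ∉ U }. Call b atomic if there do not exist nonzero b₁, b₂ ∈ ℕA with b₁ + b₂ = b such that every u ∈ F_b can be written u = u₁ + u₂ with u₁ ∈ F_{b₁} and u₂ ∈ F_{b₂}. Then the set of atomic b ∈ ℕA is finite. -/

import Mathlib

/-- The `(M,A)` fiber over `b`: lattice points `u ∈ ℕⁿ` with `Au = b` whose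
exponent is not in the upper set `U` (i.e. `x^u ∉ M`). -/
def MAFiber {d n : ℕ} (A : Matrix (Fin d) (Fin n) ℕ) (U : Set (Fin n → ℕ))
    (b : Fin d → ℕ) : Set (Fin n → ℕ) :=
  { u : Fin n → ℕ | A.mulVec u = b ∧ u ∉ U }

/-!
Write `f u = A u` and `F_b` for the fiber of `f` over `b` outside `U`. Order the range of `f` by
declaring `b ≼ b'` when `b'` is obtained from `b` by adding some `f t` and every point of the fiber
over `b'` dominates a point of the fiber over `b`. If `b ≼ b'` with `b ≠ 0` and `b ≠ b'`, then `b'`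
is not atomic: subtracting from `u ∈ F_{b'}` a point of `F_b` below it leaves a point of the fiber
over `f t`, by cancellation in the target. So the nonzero atomic elements form an antichain, and it
suffices that `≼` is a well-quasi-order on the range.

This follows once the upper sets of `ℕⁿ`, ordered by reverse inclusion, are well-quasi-ordered. The
complement of an upper set is a finite union of boxes with corners in `(ℕ ∪ {∞})ⁿ`; a finite set of
corners dominated by another one gives an inclusion of unions of boxes, and domination of finite
sets is a well-quasi-order by Higman's lemma.
-/

section UpperSets

variable {ι α P : Type*}

theorem wellQuasiOrdered_isCofinalFor_finset [Preorder P] [WellQuasiOrderedLE P] :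
    WellQuasiOrdered fun s t : Finset P ↦ IsCofinalFor (s : Set P) (t : Set P) := by
  intro S
  have higman := Set.PartiallyWellOrderedOn.partiallyWellOrderedOn_sublistForall₂ (· ≤ ·)
    (Set.isPWO_of_wellQuasiOrderedLE (Set.univ : Set P))
  obtain ⟨i, j, hij, hle⟩ := higman fun k ↦ ⟨(S k).toList, fun _ _ ↦ Set.mem_univ _⟩
  obtain ⟨l, hl, hsub⟩ := List.sublistForall₂_iff.1 hle
  refine ⟨i, j, hij, fun x hx ↦ ?_⟩
  obtain ⟨k, hk, rfl⟩ := List.getElem_of_mem (Finset.mem_toList.2 hx)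
  have hk' : k < l.length := hl.length_eq ▸ hk
  exact ⟨l[k], Finset.mem_toList.1 (hsub.subset (List.getElem_mem hk')), hl.get hk hk'⟩

theorem exists_finset_upperClosure_eq [PartialOrder P] [WellQuasiOrderedLE P] (U : UpperSet P) :
    ∃ G : Finset P, upperClosure (G : Set P) = U := by
  have hfin : {x | Minimal (· ∈ U) x}.Finite :=
    WellQuasiOrderedLE.finite_of_isAntichain (setOfPred_minimal_antichain (· ∈ U))
  refine ⟨hfin.toFinset, SetLike.ext fun u ↦ ?_⟩
  simp only [mem_upperClosure, Set.Finite.coe_toFinset, Set.mem_ofPred_eq]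
  refine ⟨fun ⟨g, hg, hgu⟩ ↦ U.upper hgu hg.prop, fun hu ↦ ?_⟩
  obtain ⟨g, hgu, hg⟩ := exists_minimal_le_of_wellFoundedLT (· ∈ U) u hu
  exact ⟨g, hg, hgu⟩

/-- The box of all points of `ι → α` strictly below the corner `c` in every coordinate. A
coordinate with `c i = ⊤` is unconstrained, so boxes may be unbounded. -/
def openBox [LT α] (c : ι → WithTop α) : Set (ι → α) :=
  {u | ∀ i, (u i : WithTop α) < c i}

theorem openBox_mono [Preorder α] : Monotone (openBox : (ι → WithTop α) → Set (ι → α)) :=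
  fun _ _ hcd _ hu i ↦ (hu i).trans_le (hcd i)

theorem mem_openBox_update_top [DecidableEq ι] [Preorder α] {u : ι → α} {i : ι} {a : α} :
    u ∈ openBox (Function.update ⊤ i (a : WithTop α)) ↔ u i < a := by
  simp [openBox, Function.forall_update_iff ⊤ fun j c ↦ (u j : WithTop α) < c]

theorem mem_openBox_finset_inf [LinearOrder α] {κ : Type*} {s : Finset κ}
    {c : κ → ι → WithTop α} {u : ι → α} : u ∈ openBox (s.inf c) ↔ ∀ k ∈ s, u ∈ openBox (c k) := by
  have hcoord (i : ι) : (u i : WithTop α) < s.inf c i ↔ ∀ k ∈ s, (u i : WithTop α) < c k i := by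
    rw [Finset.inf_apply]
    exact Finset.lt_inf_iff (WithTop.coe_lt_top (u i))
  exact ⟨fun h k hk i ↦ (hcoord i).1 (h i) k hk, fun h i ↦ (hcoord i).2 fun k hk ↦ h k hk i⟩

theorem exists_finset_compl_upperClosure_eq_biUnion_openBox [Finite ι] [LinearOrder α]
    (G : Finset (ι → α)) :
    ∃ C : Finset (ι → WithTop α),
      (upperClosure (G : Set (ι → α)) : Set (ι → α))ᶜ = ⋃ c ∈ C, openBox c := by
  classical
  have := Fintype.ofFinite ι
  -- `σ` selects, for each `g ∈ G`, a coordinate in which the points of the box stay below `g`.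
  let corner (σ : G → ι) : ι → WithTop α :=
    Finset.univ.inf fun g ↦ Function.update ⊤ (σ g) (g.1 (σ g) : WithTop α)
  refine ⟨Finset.univ.image corner, Set.ext fun u ↦ ?_⟩
  calc u ∈ (upperClosure (G : Set (ι → α)) : Set (ι → α))ᶜ
      ↔ ∀ g : G, ∃ i, u i < g.1 i := by simp [Pi.le_def]
    _ ↔ ∃ σ : G → ι, ∀ g, u (σ g) < g.1 (σ g) := Classical.skolem
    _ ↔ ∃ σ, u ∈ openBox (corner σ) := by
      simp only [corner, mem_openBox_finset_inf, mem_openBox_update_top, Finset.mem_univ,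
        true_imp_iff]
    _ ↔ u ∈ ⋃ c ∈ Finset.univ.image corner, openBox c := by simp

instance instWellQuasiOrderedLEUpperSetPi [Finite ι] [LinearOrder α] [WellFoundedLT α] :
    WellQuasiOrderedLE (UpperSet (ι → α)) where
  wqo V := by
    have hboxes (k : ℕ) : ∃ C : Finset (ι → WithTop α), (V k : Set (ι → α))ᶜ =
        ⋃ c ∈ C, openBox c := by
      obtain ⟨G, hG⟩ := exists_finset_upperClosure_eq (V k)
      exact hG ▸ exists_finset_compl_upperClosure_eq_biUnion_openBox G
    choose C hC using hboxes
    obtain ⟨i, j, hij, hcof⟩ := wellQuasiOrdered_isCofinalFor_finset C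
    suffices (V i : Set (ι → α))ᶜ ⊆ (V j : Set (ι → α))ᶜ from
      ⟨i, j, hij, Set.compl_subset_compl.1 this⟩
    rw [hC, hC]
    refine Set.iUnion₂_subset fun c hc ↦ ?_
    obtain ⟨d, hd, hcd⟩ := hcof hc
    exact (openBox_mono hcd).trans (Set.subset_biUnion_of_mem hd)

end UpperSets

section Fibers

variable {M B : Type*} [AddMonoid M]

/-- The fiber of `f` over `b`, with the points of `U` removed. For `f` the multiplication by a
matrix this is `MAFiber`. -/
def avoidingFiber [AddMonoid B] (f : M →+ B) (U : Set M) (b : B) : Set M :=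
  {u | f u = b ∧ u ∉ U}

/-- `b` is atomic if it lies in the range of `f` and its fiber outside `U` is not contained in the
sum of the fibers over two nonzero elements of the range that add up to `b`. -/
def IsAtomicFiber [AddMonoid B] (f : M →+ B) (U : Set M) (b : B) : Prop :=
  (∃ u, f u = b) ∧ ¬ ∃ b₁ b₂ : B, b₁ ≠ 0 ∧ b₂ ≠ 0 ∧ (∃ u₁, f u₁ = b₁) ∧ (∃ u₂, f u₂ = b₂) ∧
    b₁ + b₂ = b ∧
    ∀ u ∈ avoidingFiber f U b, ∃ u₁ ∈ avoidingFiber f U b₁, ∃ u₂ ∈ avoidingFiber f U b₂,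
      u = u₁ + u₂

/-- The relation `b ≼ b'`: the difference of `b'` and `b` is in the range of `f`, and every point
of the fiber over `b'` lies above a point of the fiber over `b`. On the range of `f` it is a
well-quasi-order for which the nonzero atomic elements form an antichain. -/
def FiberLE [Preorder M] [AddMonoid B] (f : M →+ B) (U : Set M) (b b' : B) : Prop :=
  (∃ t, b + f t = b') ∧ upperClosure (avoidingFiber f U b) ≤ upperClosure (avoidingFiber f U b')

variable [Preorder M]

theorem partiallyWellOrderedOn_range_fiberLE [ExistsAddOfLE M] [AddMonoid B]
    [WellQuasiOrderedLE (UpperSet M)] (f : M →+ B) (U : Set M) :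
    (Set.range f).PartiallyWellOrderedOn (FiberLE f U) := by
  intro b
  choose w hw using fun k ↦ (b k).2
  obtain ⟨i, j, hij, hfiber, hpoint⟩ := wellQuasiOrdered_le
    fun k ↦ (upperClosure (avoidingFiber f U (b k)), UpperSet.Ici (w k))
  obtain ⟨t, ht⟩ := exists_add_of_le (hpoint (Set.self_mem_Ici))
  exact ⟨i, j, hij, ⟨t, by rw [← hw i, ← hw j, ht, map_add]⟩, hfiber⟩

variable [CanonicallyOrderedAdd M] [AddLeftCancelMonoid B]
variable {f : M →+ B} {U : Set M} {b b' : B}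

theorem exists_add_of_mem_avoidingFiber {t : M} (hU : IsUpperSet U) (hb : b + f t = b')
    (hle : upperClosure (avoidingFiber f U b) ≤ upperClosure (avoidingFiber f U b')) :
    ∀ u ∈ avoidingFiber f U b', ∃ u₁ ∈ avoidingFiber f U b, ∃ u₂ ∈ avoidingFiber f U (f t),
      u = u₁ + u₂ := by
  intro u hu
  obtain ⟨v, hv, hvu⟩ := mem_upperClosure.1 (hle (subset_upperClosure hu))
  obtain ⟨s, rfl⟩ := exists_add_of_le hvu
  have hs : f s = f t := add_left_cancel (a := b) (by rw [hb, ← hu.1, map_add, hv.1])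
  exact ⟨v, hv, s, ⟨hs, fun hsU ↦ hu.2 (hU le_add_self hsU)⟩, rfl⟩

theorem FiberLE.eq_of_isAtomicFiber (hle : FiberLE f U b b') (hU : IsUpperSet U)
    (hrange : b ∈ Set.range f) (hb : b ≠ 0) (hatomic : IsAtomicFiber f U b') : b = b' := by
  obtain ⟨⟨t, ht⟩, hfiber⟩ := hle
  by_contra hne
  have ht0 : f t ≠ 0 := fun h ↦ hne (by rw [← ht, h, add_zero])
  exact hatomic.2 ⟨b, f t, hb, ht0, hrange, ⟨t, rfl⟩, ht,
    exists_add_of_mem_avoidingFiber hU ht hfiber⟩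

theorem isAntichain_fiberLE_isAtomicFiber (f : M →+ B) (hU : IsUpperSet U) :
    IsAntichain (FiberLE f U) ({b | IsAtomicFiber f U b} \ {0}) :=
  fun _ hb _ hb' hne hle ↦ hne (hle.eq_of_isAtomicFiber hU hb.1.1 hb.2 hb'.1)

theorem atomic_MA_fibers_finite_general [WellQuasiOrderedLE (UpperSet M)] (f : M →+ B)
    (hU : IsUpperSet U) : {b | IsAtomicFiber f U b}.Finite := by
  have hpwo : ({b | IsAtomicFiber f U b} \ {0}).PartiallyWellOrderedOn (FiberLE f U) :=
    (partiallyWellOrderedOn_range_fiberLE f U).mono fun _ hb ↦ hb.1.1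
  exact ((isAntichain_fiberLE_isAtomicFiber f hU).finite_of_partiallyWellOrderedOn hpwo).of_sdiff
    (Set.finite_singleton 0)

end Fibers

/-- **Finiteness of atomic `(M,A)` fibers.**  Let `U ⊆ ℕⁿ` be an upper set (the
exponent set of a monomial ideal `M`), and `A ∈ ℕ^{d×n}` a matrix with nonzero
columns.  Call `b ∈ ℕA` *atomic* if there are no nonzero `b₁, b₂ ∈ ℕA` with
`b₁ + b₂ = b` such that every `u` in the `(M,A)` fiber over `b` can be written as
`u₁ + u₂` with `u₁, u₂` in the `(M,A)` fibers over `b₁, b₂` respectively.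
Then the set of atomic elements of `ℕA` is finite. -/
theorem atomic_MA_fibers_finite {d n : ℕ} (A : Matrix (Fin d) (Fin n) ℕ)
    (hcol : ∀ j : Fin n, ∃ i : Fin d, A i j ≠ 0)
    (U : Set (Fin n → ℕ)) (hU : IsUpperSet U) :
    { b : Fin d → ℕ | (∃ u : Fin n → ℕ, A.mulVec u = b) ∧
      ¬ ∃ b₁ b₂ : Fin d → ℕ, b₁ ≠ 0 ∧ b₂ ≠ 0 ∧
        (∃ u₁ : Fin n → ℕ, A.mulVec u₁ = b₁) ∧
        (∃ u₂ : Fin n → ℕ, A.mulVec u₂ = b₂) ∧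
        b₁ + b₂ = b ∧
        ∀ u ∈ MAFiber A U b, ∃ u₁ ∈ MAFiber A U b₁, ∃ u₂ ∈ MAFiber A U b₂,
          u = u₁ + u₂ }.Finite := by
  exact atomic_MA_fibers_finite_general A.mulVecLin.toAddMonoidHom hU
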